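/- arXiv:2510.07643 — 2 statements merged into one kernel-verified Lean document; each statement's English description precedes it below -/
import Mathlib

section
/- The group of rational points of the elliptic curve E₀ : y² = x(x+1)(x+9) over ℚ is isomorphic to ℤ/2ℤ × ℤ/4ℤ; in particular E₀(ℚ) is finite (its Mordell–Weil rank is 0) and consists exactly of the point at infinity together with (0,0), (−1,0), (−9,0), (3,12), (3,−12), (−3,6), (−3,−6). -/
/-- The elliptic curve `E₀ : y² = x(x+1)(x+9)`, i.e. `y² = x³ + 10x² + 9x`,
as an affine Weierstrass curve over `ℚ`. -/
noncomputable def E0 : WeierstrassCurve.Affine ℚ :=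
  { a₁ := 0, a₂ := 10, a₃ := 0, a₄ := 9, a₆ := 0 }

/-!
If `(x, y)` is a rational point of `y² = x(x + m)(x + n)` with `y ≠ 0`, its double has abscissa
`X²`, where `X = (x² - mn) / 2y`, and both `X² + m` and `X² + n` are squares. For `E₀` the numerator
and denominator of `X` are therefore coprime integers `u, e` such that `u² + e² = v²` and
`u² + 9e² = w²`. Such integers satisfy `ue = 0` by infinite descent through a 2-isogenous curve:

* if `3 ∣ u`, the pair `(e, u / 3)` is a smaller solution;
* if `3 ∤ u`, the factorisation of `w² - v² = 8e²` gives `e = ab` with `a² - b² = c²` and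
  `a² - 4b² = d²`, and then that of `c² - d² = 3b²` gives `b = 2fg` with `f² + g²` and `f² + 9g²`
  squares, so that `(f, g)` is a smaller solution.

Hence `X = 0`, that is `x = ±3`, at every rational point with `y ≠ 0`.
-/

section CoprimeFactors

variable {R : Type*} [CommRing R] {x y z k : R}

theorem isCoprime_of_isCoprime_add_mul_of_mul_eq_sq (hz : IsCoprime (x + k * y) z)
    (h : x * y = z ^ 2) : IsCoprime x y := by
  have hxy : IsCoprime (x + k * y) (x * y) := h ▸ hz.pow_right
  exact hxy.of_mul_right_right.of_add_mul_right_left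

theorem isCoprime_sq_add_mul_sq (h : IsCoprime x y) (k : R) :
    IsCoprime (x ^ 2 + k * y ^ 2) y := by
  rw [sq y, ← mul_assoc]
  exact h.pow_left.add_mul_right_left _

theorem isCoprime_of_sq_eq_sq_add_mul_sq (h : IsCoprime x y)
    (hz : z ^ 2 = x ^ 2 + k * y ^ 2) : IsCoprime z y := by
  rw [← IsCoprime.pow_left_iff two_pos, hz]
  exact isCoprime_sq_add_mul_sq h k

theorem isSquare_of_isSquare_sq_mul [IsDomain R] [IsIntegrallyClosed R] (hx : x ≠ 0)
    (h : IsSquare (x ^ 2 * y)) : IsSquare y := by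
  obtain ⟨r, hr⟩ := h
  obtain ⟨s, rfl⟩ : x ∣ r :=
    (IsIntegrallyClosed.pow_dvd_pow_iff two_ne_zero).mp ⟨y, by rw [hr, sq]⟩
  exact ⟨s, mul_left_cancel₀ (pow_ne_zero 2 hx) (by rw [hr]; ring)⟩

end CoprimeFactors

section IntegerSquares

theorem eq_sq_and_eq_sq_or_eq_neg_sq_and_eq_neg_sq {x y f g : ℤ} (hxy : 0 ≤ x * y)
    (hf : x = f ^ 2 ∨ x = -f ^ 2) (hg : y = g ^ 2 ∨ y = -g ^ 2) :
    x = f ^ 2 ∧ y = g ^ 2 ∨ x = -f ^ 2 ∧ y = -g ^ 2 := by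
  have hzero (hle : 0 ≤ -(f * g) ^ 2) : f = 0 ∨ g = 0 := by
    simpa using le_antisymm (neg_nonneg.mp hle) (sq_nonneg (f * g))
  rcases hf with rfl | rfl <;> rcases hg with rfl | rfl
  · exact .inl ⟨rfl, rfl⟩
  · rcases hzero (by linarith) with rfl | rfl <;> simp
  · rcases hzero (by linarith) with rfl | rfl <;> simp
  · exact .inr ⟨rfl, rfl⟩

theorem exists_eq_sq_or_eq_neg_sq_of_mul_eq_sq {x y z : ℤ} (hxy : IsCoprime x y)
    (h : x * y = z ^ 2) :
    ∃ f g : ℤ, IsCoprime f g ∧ z = f * g ∧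
      (x = f ^ 2 ∧ y = g ^ 2 ∨ x = -f ^ 2 ∧ y = -g ^ 2) := by
  obtain ⟨f, hf⟩ := Int.sq_of_isCoprime hxy h
  obtain ⟨g, hg⟩ := Int.sq_of_isCoprime hxy.symm (mul_comm y x ▸ h)
  have hsign := eq_sq_and_eq_sq_or_eq_neg_sq_and_eq_neg_sq (h ▸ sq_nonneg z) hf hg
  have hfg : IsCoprime f g := by
    rcases hsign with ⟨rfl, rfl⟩ | ⟨rfl, rfl⟩
    · exact (IsCoprime.pow_iff two_pos two_pos).mp hxy
    · exact (IsCoprime.pow_iff two_pos two_pos).mp ((IsCoprime.neg_neg_iff _ _).mp hxy)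
  have hz : z ^ 2 = (f * g) ^ 2 := by
    rcases hsign with ⟨rfl, rfl⟩ | ⟨rfl, rfl⟩ <;> linarith
  rcases sq_eq_sq_iff_eq_or_eq_neg.mp hz with hz | hz
  · exact ⟨f, g, hfg, hz, hsign⟩
  · exact ⟨f, -g, hfg.neg_right, by rw [hz, mul_neg], by rwa [neg_sq]⟩

theorem odd_of_sq_add_sq_eq_sq {x y z : ℤ} (hxy : IsCoprime x y) (h : x ^ 2 + y ^ 2 = z ^ 2) :
    Odd z := by
  have htriple : PythagoreanTriple x y z := by simpa only [PythagoreanTriple, ← sq] using h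
  have hparity := htriple.even_odd_of_coprime (Int.isCoprime_iff_gcd_eq_one.mp hxy)
  simp only [← Int.even_iff, ← Int.odd_iff] at hparity
  have hodd : Odd (z ^ 2) := by
    rw [← h]
    rcases hparity with ⟨hx, hy⟩ | ⟨hx, hy⟩
    · exact (hx.pow_of_ne_zero two_ne_zero).add_odd hy.pow
    · exact hx.pow.add_even (hy.pow_of_ne_zero two_ne_zero)
  exact Int.odd_pow.mp hodd |>.resolve_right two_ne_zero

theorem odd_of_sq_eq_sq_add_two_mul {x y k : ℤ} (hx : Odd x) (h : y ^ 2 = x ^ 2 + 2 * k) :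
    Odd y := by
  rw [← Int.odd_pow' two_ne_zero, h]
  exact hx.pow.add_even (even_two_mul k)

theorem exists_factors_of_sq_sub_sq_eq_eight_mul_sq {v w e : ℤ} (hv : Odd v)
    (h : w ^ 2 - v ^ 2 = 8 * e ^ 2) :
    ∃ x y : ℤ, Odd x ∧ x * y = e ^ 2 ∧ v = x - 2 * y := by
  have hw : Odd w := odd_of_sq_eq_sq_add_two_mul (k := 4 * e ^ 2) hv (by linarith)
  wlog h4 : 4 ∣ w - v generalizing w
  · have h4' : 4 ∣ -w - v := by
      rcases Int.four_dvd_add_or_sub_of_odd hw hv with h | h <;> omega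
    exact this (by rwa [neg_sq]) hw.neg h4'
  obtain ⟨y, hy⟩ := h4
  obtain rfl : w = v + 4 * y := by omega
  exact ⟨v + 2 * y, y, hv.add_even (even_two_mul y), by linarith, by ring⟩

theorem exists_factors_of_sq_sub_sq_eq_twelve_mul_sq {c d t : ℤ} (hc : Odd c)
    (h : c ^ 2 - d ^ 2 = 12 * t ^ 2) :
    ∃ x y : ℤ, x * y = t ^ 2 ∧ c = x + 3 * y := by
  have hd : Odd d := odd_of_sq_eq_sq_add_two_mul (k := -6 * t ^ 2) hc (by linarith)
  wlog h3 : 3 ∣ c - d generalizing d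
  · have hmul : 3 ∣ (c + d) * (c - d) := ⟨4 * t ^ 2, by linear_combination h⟩
    have h3' : 3 ∣ c + d := (Int.prime_three.dvd_or_dvd hmul).resolve_right h3
    exact this (by rwa [neg_sq]) hd.neg (by rwa [sub_neg_eq_add])
  have h2 : 2 ∣ c - d := (hc.sub_odd hd).two_dvd
  obtain ⟨y, hy⟩ : 6 ∣ c - d := by omega
  obtain rfl : d = c - 6 * y := by omega
  exact ⟨c - 3 * y, y, by linarith, by ring⟩

end IntegerSquares

/-- The pair `(x, y)` solves Euler's problem of concordant forms for `m` and `n`: both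
`x² + m y²` and `x² + n y²` are squares. -/
def Concordant {R : Type*} [CommRing R] (m n x y : R) : Prop :=
  IsSquare (x ^ 2 + m * y ^ 2) ∧ IsSquare (x ^ 2 + n * y ^ 2)

namespace Concordant

theorem mul_left {R : Type*} [CommRing R] {m n x y : R} (h : Concordant m n x y) (t : R) :
    Concordant m n (t * x) (t * y) := by
  have hom (k : R) : (t * x) ^ 2 + k * (t * y) ^ 2 = t ^ 2 * (x ^ 2 + k * y ^ 2) := by ring
  exact ⟨hom m ▸ (IsSquare.sq t).mul h.1, hom n ▸ (IsSquare.sq t).mul h.2⟩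

theorem intCast_iff {m n x y : ℤ} :
    Concordant (m : ℚ) n x y ↔ Concordant m n x y := by
  simp only [Concordant, ← Rat.isSquare_intCast_iff]
  norm_cast

theorem num_den {m n : ℤ} {x : ℚ} (h : Concordant (m : ℚ) n x 1) :
    Concordant m n x.num x.den := by
  have h' := h.mul_left x.den
  rw [Rat.den_mul_eq_num, mul_one] at h'
  exact intCast_iff.mp (mod_cast h')

theorem of_sq_eq_mul_add_mul_add {K : Type*} [Field K] [NeZero (2 : K)] {m n x y : K} (hy : y ≠ 0)
    (h : y ^ 2 = x * (x + m) * (x + n)) :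
    Concordant m n ((x ^ 2 - m * n) / (2 * y)) 1 := by
  have h2 : (2 : K) ≠ 0 := two_ne_zero
  refine ⟨⟨(x ^ 2 + 2 * m * x + m * n) / (2 * y), ?_⟩,
    ⟨(x ^ 2 + 2 * n * x + m * n) / (2 * y), ?_⟩⟩
  · field_simp
    linear_combination 4 * m * h
  · field_simp
    linear_combination 4 * n * h

theorem swap_of_mul_left {R : Type*} [CommRing R] [IsDomain R] [IsIntegrallyClosed R]
    {p x y : R} (hp : p ≠ 0) (h : Concordant 1 (p ^ 2) (p * x) y) :
    Concordant 1 (p ^ 2) y x := by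
  obtain ⟨h1, hp2⟩ := h
  refine ⟨isSquare_of_isSquare_sq_mul hp ?_, ?_⟩
  · rwa [show p ^ 2 * (y ^ 2 + 1 * x ^ 2) = (p * x) ^ 2 + p ^ 2 * y ^ 2 by ring]
  · rwa [one_mul, mul_pow, add_comm] at h1

theorem exists_mul_eq_sq_of_one_nine {u e : ℤ} (hue : IsCoprime u e)
    (h : Concordant 1 9 u e) :
    ∃ a b : ℤ, Odd a ∧ IsCoprime a b ∧ e = a * b ∧
      (a ^ 2 - 4 * b ^ 2) * (a ^ 2 - b ^ 2) = u ^ 2 := by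
  obtain ⟨⟨v, hv⟩, ⟨w, hw⟩⟩ := h
  have hv_odd : Odd v := odd_of_sq_add_sq_eq_sq hue (by linarith)
  obtain ⟨x, y, hx_odd, hxy, rfl⟩ :=
    exists_factors_of_sq_sub_sq_eq_eight_mul_sq (w := w) (e := e) hv_odd (by linarith)
  have hve : IsCoprime (x + -2 * y) e :=
    isCoprime_of_sq_eq_sq_add_mul_sq (k := 1) hue (by linear_combination -hv)
  have hcop : IsCoprime x y := isCoprime_of_isCoprime_add_mul_of_mul_eq_sq hve hxy
  obtain ⟨a, b, hab, rfl, ⟨rfl, rfl⟩ | ⟨rfl, rfl⟩⟩ :=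
    exists_eq_sq_or_eq_neg_sq_of_mul_eq_sq hcop hxy
  · exact ⟨a, b, (Int.odd_pow' two_ne_zero).mp hx_odd, hab, rfl, by linear_combination -hv⟩
  · exact ⟨a, b, (Int.odd_pow' two_ne_zero).mp (odd_neg.mp hx_odd), hab, rfl,
      by linear_combination -hv⟩

theorem exists_neg_one_neg_four {u e : ℤ} (hue : IsCoprime u e) (h3 : ¬3 ∣ u)
    (h : Concordant 1 9 u e) :
    ∃ a b : ℤ, Odd a ∧ IsCoprime a b ∧ e = a * b ∧ Concordant (-1) (-4) a b := by
  obtain ⟨a, b, ha, hab, rfl, hu⟩ := exists_mul_eq_sq_of_one_nine hue h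
  have h3' : ¬3 ∣ a ^ 2 - b ^ 2 := fun hdvd =>
    h3 (Int.prime_three.dvd_of_dvd_pow (hu ▸ hdvd.mul_left _))
  have hcop : IsCoprime (a ^ 2 - 4 * b ^ 2) (a ^ 2 - b ^ 2) := by
    have hb : IsCoprime (a ^ 2 - b ^ 2) (b ^ 2) := by
      simpa [sub_eq_add_neg] using (isCoprime_sq_add_mul_sq hab (-1)).pow_right (n := 2)
    have h3b : IsCoprime (3 * b ^ 2) (a ^ 2 - b ^ 2) :=
      (Int.prime_three.coprime_iff_not_dvd.mpr h3').mul_left hb.symm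
    have hsub := h3b.neg_left.add_mul_left_left 1
    rwa [show -(3 * b ^ 2) + (a ^ 2 - b ^ 2) * 1 = a ^ 2 - 4 * b ^ 2 by ring] at hsub
  obtain ⟨d, c, -, rfl, ⟨hd, hc⟩ | ⟨hd, -⟩⟩ :=
    exists_eq_sq_or_eq_neg_sq_of_mul_eq_sq hcop hu
  · exact ⟨a, b, ha, hab, rfl, ⟨c, by linear_combination hc⟩, ⟨d, by linear_combination hd⟩⟩
  · have ha4 := Int.sq_mod_four_eq_one_of_odd ha
    have hd_odd : Odd d :=
      odd_of_sq_eq_sq_add_two_mul (k := 2 * b ^ 2 - a ^ 2) ha (by linarith)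
    have hd4 := Int.sq_mod_four_eq_one_of_odd hd_odd
    omega

theorem even_of_neg_one_neg_four {a b : ℤ} (ha : Odd a)
    (h : Concordant (-1) (-4) a b) : Even b := by
  obtain ⟨-, d, hd⟩ := h
  by_contra hb
  rw [Int.not_even_iff_odd] at hb
  have hd_odd : Odd d := odd_of_sq_eq_sq_add_two_mul (k := -2 * b ^ 2) ha (by linarith)
  have ha8 := Int.eight_dvd_sq_sub_one_of_odd ha
  have hb8 := Int.eight_dvd_sq_sub_one_of_odd hb
  have hd8 := Int.eight_dvd_sq_sub_one_of_odd hd_odd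
  rw [← sq] at hd
  omega

theorem exists_mul_eq_sq_of_neg_one_neg_four {a b : ℤ} (ha : Odd a)
    (hab : IsCoprime a b) (h : Concordant (-1) (-4) a b) :
    ∃ f g : ℤ, IsCoprime f g ∧ Odd (f ^ 2 + g ^ 2) ∧ b = 2 * (f * g) ∧
      (f ^ 2 + g ^ 2) * (f ^ 2 + 9 * g ^ 2) = a ^ 2 := by
  have hb : Even b := even_of_neg_one_neg_four ha h
  obtain ⟨⟨c, hc⟩, ⟨d, hd⟩⟩ := h
  obtain ⟨t, rfl⟩ := hb.two_dvd
  have hc_odd : Odd c := odd_of_sq_eq_sq_add_two_mul (k := -2 * t ^ 2) ha (by linarith)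
  obtain ⟨x, y, hxy, rfl⟩ :=
    exists_factors_of_sq_sub_sq_eq_twelve_mul_sq (d := d) (t := t) hc_odd (by linarith)
  have hcz : IsCoprime (x + 3 * y) t :=
    (isCoprime_of_sq_eq_sq_add_mul_sq hab (by rw [hc, sq])).of_mul_right_right
  have hcop : IsCoprime x y := isCoprime_of_isCoprime_add_mul_of_mul_eq_sq hcz hxy
  obtain ⟨f, g, hfg, rfl, ⟨rfl, rfl⟩ | ⟨rfl, rfl⟩⟩ :=
    exists_eq_sq_or_eq_neg_sq_of_mul_eq_sq hcop hxy
  · exact ⟨f, g, hfg, by grind, rfl, by linear_combination -hc⟩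
  · exact ⟨f, g, hfg, by grind, rfl, by linear_combination -hc⟩

theorem exists_one_nine {a b : ℤ} (ha : Odd a) (hab : IsCoprime a b)
    (h : Concordant (-1) (-4) a b) :
    ∃ f g : ℤ, IsCoprime f g ∧ b = 2 * (f * g) ∧ Concordant 1 9 f g := by
  obtain ⟨f, g, hfg, hodd, rfl, hmul⟩ := exists_mul_eq_sq_of_neg_one_neg_four ha hab h
  have hcop : IsCoprime (f ^ 2 + g ^ 2) (f ^ 2 + 9 * g ^ 2) := by
    have hg : IsCoprime (f ^ 2 + g ^ 2) (g ^ 2) := by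
      simpa using (isCoprime_sq_add_mul_sq hfg 1).pow_right (n := 2)
    have h8g : IsCoprime (f ^ 2 + g ^ 2) (2 ^ 3 * g ^ 2) :=
      (Int.isCoprime_two_right.mpr hodd).pow_right.mul_right hg
    have hadd := h8g.add_mul_left_right 1
    rwa [show 2 ^ 3 * g ^ 2 + (f ^ 2 + g ^ 2) * 1 = f ^ 2 + 9 * g ^ 2 by ring] at hadd
  obtain ⟨v, w, -, rfl, ⟨hv, hw⟩ | ⟨hv, -⟩⟩ :=
    exists_eq_sq_or_eq_neg_sq_of_mul_eq_sq hcop hmul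
  · exact ⟨f, g, hfg, rfl, ⟨v, by linear_combination hv⟩, ⟨w, by linear_combination hw⟩⟩
  · have : f ^ 2 + g ^ 2 = 0 := by nlinarith [sq_nonneg f, sq_nonneg g, sq_nonneg v]
    exact absurd hodd (by simp [this])

theorem exists_natAbs_mul_lt {u e : ℤ} (hue : IsCoprime u e) (h0 : u * e ≠ 0)
    (h : Concordant 1 9 u e) :
    ∃ f g : ℤ, IsCoprime f g ∧ f * g ≠ 0 ∧ Concordant 1 9 f g ∧
      (f * g).natAbs < (u * e).natAbs := by
  by_cases h3 : 3 ∣ u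
  · obtain ⟨t, rfl⟩ := h3
    refine ⟨e, t, hue.symm.of_mul_right_right, by grind, swap_of_mul_left three_ne_zero h, ?_⟩
    rw [mul_assoc, mul_comm t, Int.natAbs_mul 3]
    have : 0 < (e * t).natAbs := Int.natAbs_pos.mpr (by grind)
    grind
  · obtain ⟨a, b, ha, hab, rfl, hneg⟩ := h.exists_neg_one_neg_four hue h3
    obtain ⟨f, g, hfg, rfl, hpos⟩ := hneg.exists_one_nine ha hab
    have hfg0 : f * g ≠ 0 := by grind
    refine ⟨f, g, hfg, hfg0, hpos, ?_⟩
    have hua : 0 < (u * a).natAbs := Int.natAbs_pos.mpr (by grind)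
    have hfg_pos : 0 < (f * g).natAbs := Int.natAbs_pos.mpr hfg0
    calc (f * g).natAbs < 2 * (f * g).natAbs := by lia
      _ ≤ (u * a).natAbs * (2 * (f * g).natAbs) := Nat.le_mul_of_pos_left _ hua
      _ = (u * (a * (2 * (f * g)))).natAbs := by
        rw [← mul_assoc u, Int.natAbs_mul (u * a), Int.natAbs_mul 2]; rfl

theorem mul_eq_zero_of_one_nine {u e : ℤ} (hue : IsCoprime u e)
    (h : Concordant 1 9 u e) : u * e = 0 := by
  induction hN : (u * e).natAbs using Nat.strong_induction_on generalizing u e with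
  | _ N ih =>
    by_contra h0
    obtain ⟨f, g, hfg, hfg0, hfg_conc, hlt⟩ := h.exists_natAbs_mul_lt hue h0
    exact hfg0 (ih _ (hN ▸ hlt) hfg hfg_conc rfl)

theorem eq_zero_of_one_nine {x : ℚ} (h : Concordant 1 9 x 1) : x = 0 := by
  have hint : Concordant 1 9 x.num x.den := num_den (mod_cast h)
  have hmul := hint.mul_eq_zero_of_one_nine (Rat.isCoprime_num_den x)
  simpa using hmul

end Concordant

theorem sq_eq_mul_add_one_mul_add_nine_iff (x y : ℚ) :
    y ^ 2 = x * (x + 1) * (x + 9) ↔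
      (x, y) ∈ ({(0, 0), (-1, 0), (-9, 0), (3, 12), (3, -12), (-3, 6), (-3, -6)} :
        Set (ℚ × ℚ)) := by
  simp only [Set.mem_insert_iff, Set.mem_singleton_iff, Prod.mk.injEq]
  constructor
  · intro h
    by_cases hy : y = 0
    · subst hy
      grind
    · have hx : x ^ 2 - 1 * 9 = 0 := by
        simpa [hy] using (Concordant.of_sq_eq_mul_add_mul_add hy h).eq_zero_of_one_nine
      rcases (by grind : x = 3 ∨ x = -3) with rfl | rfl
      · have : y = 12 ∨ y = -12 := by grind
        tauto
      · have : y = 6 ∨ y = -6 := by grind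
        tauto
  · rintro (⟨rfl, rfl⟩ | ⟨rfl, rfl⟩ | ⟨rfl, rfl⟩ | ⟨rfl, rfl⟩ | ⟨rfl, rfl⟩ | ⟨rfl, rfl⟩ |
      ⟨rfl, rfl⟩) <;> norm_num

section ZModProdLift

variable {G : Type*} [AddCommGroup G] {m n : ℕ} {S T : G}

/-- The homomorphism `(i, j) ↦ i • S + j • T` from `ℤ/m × ℤ/n` determined by two elements of an
abelian group that are killed by `m` and `n` respectively. -/
def zmodProdLift (hS : m • S = 0) (hT : n • T = 0) : ZMod m × ZMod n →+ G :=
  (ZMod.lift m ⟨zmultiplesHom G S, by simpa using hS⟩).coprod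
    (ZMod.lift n ⟨zmultiplesHom G T, by simpa using hT⟩)

theorem zmodProdLift_intCast (hS : m • S = 0) (hT : n • T = 0) (i j : ℤ) :
    zmodProdLift hS hT (i, j) = i • S + j • T := by
  simp [zmodProdLift]

theorem zmodProdLift_one_zero (hS : m • S = 0) (hT : n • T = 0) :
    zmodProdLift hS hT (1, 0) = S := by
  simpa using zmodProdLift_intCast hS hT 1 0

theorem zmodProdLift_zero_one (hS : m • S = 0) (hT : n • T = 0) :
    zmodProdLift hS hT (0, 1) = T := by
  simpa using zmodProdLift_intCast hS hT 0 1

theorem zmodProdLift_surjective (hS : m • S = 0) (hT : n • T = 0)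
    (hgen : AddSubgroup.closure {S, T} = ⊤) : Function.Surjective (zmodProdLift hS hT) := by
  rw [← AddMonoidHom.range_eq_top, eq_top_iff, ← hgen, AddSubgroup.closure_le]
  rintro _ (rfl | rfl)
  · exact ⟨(1, 0), zmodProdLift_one_zero hS hT⟩
  · exact ⟨(0, 1), zmodProdLift_zero_one hS hT⟩

theorem zmodProdLift_two_four_injective (hS : 2 • S = 0) (hT : 4 • T = 0) (hS₀ : S ≠ 0)
    (hT₀ : 2 • T ≠ 0) (hST₀ : S + 2 • T ≠ 0) : Function.Injective (zmodProdLift hS hT) := by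
  have map_zero_two : zmodProdLift hS hT (0, 2) = 2 • T :=
    calc zmodProdLift hS hT (0, 2) = zmodProdLift hS hT (2 • (0, 1)) := rfl
      _ = 2 • T := by rw [map_nsmul, zmodProdLift_zero_one]
  have map_one_two : zmodProdLift hS hT (1, 2) = S + 2 • T :=
    calc zmodProdLift hS hT (1, 2) = zmodProdLift hS hT ((1, 0) + (0, 2)) := rfl
      _ = S + 2 • T := by rw [map_add, zmodProdLift_one_zero, map_zero_two]
  have eq_torsion_or_double : ∀ a : ZMod 2 × ZMod 4,
      a = 0 ∨ a = (1, 0) ∨ a = (0, 2) ∨ a = (1, 2) ∨ a + a = (0, 2) := by decide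
  rw [injective_iff_map_eq_zero]
  intro a ha
  rcases eq_torsion_or_double a with rfl | rfl | rfl | rfl | hdouble
  · rfl
  · exact absurd (zmodProdLift_one_zero hS hT ▸ ha) hS₀
  · exact absurd (map_zero_two ▸ ha) hT₀
  · exact absurd (map_one_two ▸ ha) hST₀
  · exact absurd (by rw [← map_zero_two, ← hdouble, map_add, ha, add_zero]) hT₀

end ZModProdLift

open WeierstrassCurve.Affine

theorem some_add_some_eq_some {F : Type*} [Field F] [DecidableEq F]
    {W : WeierstrassCurve.Affine F} {x₁ y₁ x₂ y₂ x₃ y₃ ℓ : F} {h₁ : W.Nonsingular x₁ y₁}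
    {h₂ : W.Nonsingular x₂ y₂} {h₃ : W.Nonsingular x₃ y₃}
    (hne : ¬(x₁ = x₂ ∧ y₁ = W.negY x₂ y₂)) (hℓ : W.slope x₁ x₂ y₁ y₂ = ℓ)
    (hx : W.addX x₁ x₂ ℓ = x₃) (hy : W.addY x₁ x₂ y₁ ℓ = y₃) :
    Point.some x₁ y₁ h₁ + Point.some x₂ y₂ h₂ = Point.some x₃ y₃ h₃ := by
  subst hℓ hx hy
  exact Point.add_some hne

namespace E0

theorem nonsingular_iff {x y : ℚ} : E0.Nonsingular x y ↔ y ^ 2 = x * (x + 1) * (x + 9) := by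
  have hΔ : WeierstrassCurve.Δ E0 ≠ 0 := by
    norm_num [E0, WeierstrassCurve.Δ, WeierstrassCurve.b₂, WeierstrassCurve.b₄,
      WeierstrassCurve.b₆, WeierstrassCurve.b₈]
  rw [← equation_iff_nonsingular_of_Δ_ne_zero hΔ, equation_iff]
  simp only [E0]
  constructor <;> intro h <;> linarith

theorem neg_some {x y : ℚ} (h : E0.Nonsingular x y) :
    -Point.some x y h =
      .some x (-y) (nonsingular_iff.mpr (by rw [neg_sq, nonsingular_iff.mp h])) := by
  rw [Point.neg_some, Point.some.injEq]
  exact ⟨rfl, by simp [E0]⟩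

/-- The point `(-1, 0)`, a generator of the factor `ℤ/2` of `E₀(ℚ)`. -/
noncomputable def T : E0.Point := .some (-1) 0 (nonsingular_iff.mpr (by norm_num))

/-- The point `(3, 12)`, a generator of the factor `ℤ/4` of `E₀(ℚ)`. -/
noncomputable def P : E0.Point := .some 3 12 (nonsingular_iff.mpr (by norm_num))

theorem two_nsmul_T : 2 • T = 0 := by
  rw [two_nsmul]
  exact Point.add_self_of_Y_eq (by simp [E0])

theorem two_nsmul_P : 2 • P = .some 0 0 (nonsingular_iff.mpr (by norm_num)) := by
  have hne : (12 : ℚ) ≠ E0.negY 3 12 := by norm_num [E0]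
  rw [two_nsmul]
  refine some_add_some_eq_some (ℓ := 4) (fun h => hne h.2) ?_ ?_ ?_
  · rw [slope_of_Y_ne rfl hne]
    norm_num [E0]
  all_goals norm_num [E0, addY, negAddY]

theorem four_nsmul_P : 4 • P = 0 := by
  rw [show 4 = 2 * 2 from rfl, mul_nsmul, two_nsmul_P, two_nsmul]
  exact Point.add_self_of_Y_eq (by simp [E0])

theorem T_add_P : T + P = .some (-3) 6 (nonsingular_iff.mpr (by norm_num)) := by
  refine some_add_some_eq_some (ℓ := 3) (by norm_num) ?_ ?_ ?_
  · rw [slope_of_X_ne (by norm_num)]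
    norm_num
  all_goals norm_num [E0, addY, negAddY]

theorem T_add_two_nsmul_P : T + 2 • P = .some (-9) 0 (nonsingular_iff.mpr (by norm_num)) := by
  rw [two_nsmul_P]
  refine some_add_some_eq_some (ℓ := 0) (by norm_num) ?_ ?_ ?_
  · rw [slope_of_X_ne (by norm_num)]
    norm_num
  all_goals norm_num [E0, addY, negAddY]

theorem closure_T_P_eq_top : AddSubgroup.closure {T, P} = ⊤ := by
  have hT : T ∈ AddSubgroup.closure {T, P} := AddSubgroup.subset_closure (by simp)
  have hP : P ∈ AddSubgroup.closure {T, P} := AddSubgroup.subset_closure (by simp)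
  have h2P := nsmul_mem hP 2
  rw [eq_top_iff]
  rintro (_ | ⟨x, y, h⟩) -
  · exact zero_mem _
  have hmem := (sq_eq_mul_add_one_mul_add_nine_iff x y).mp (nonsingular_iff.mp h)
  simp only [Set.mem_insert_iff, Set.mem_singleton_iff, Prod.mk.injEq] at hmem
  rcases hmem with ⟨rfl, rfl⟩ | ⟨rfl, rfl⟩ | ⟨rfl, rfl⟩ | ⟨rfl, rfl⟩ | ⟨rfl, rfl⟩ | ⟨rfl, rfl⟩ |
    ⟨rfl, rfl⟩
  · exact two_nsmul_P ▸ h2P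
  · exact hT
  · exact T_add_two_nsmul_P ▸ add_mem hT h2P
  · exact hP
  · exact neg_some _ ▸ neg_mem hP
  · exact T_add_P ▸ add_mem hT hP
  · exact neg_some _ ▸ neg_mem (T_add_P ▸ add_mem hT hP)

theorem zmodProdLift_T_P_injective :
    Function.Injective (zmodProdLift two_nsmul_T four_nsmul_P) := by
  apply zmodProdLift_two_four_injective
  · exact Point.some_ne_zero _
  · rw [two_nsmul_P]
    exact Point.some_ne_zero _
  · rw [T_add_two_nsmul_P]
    exact Point.some_ne_zero _

/-- The isomorphism `E₀(ℚ) ≅ ℤ/2 × ℤ/4` inverse to `(i, j) ↦ i • T + j • P`. -/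
noncomputable def pointEquiv : E0.Point ≃+ ZMod 2 × ZMod 4 :=
  (AddEquiv.ofBijective (zmodProdLift two_nsmul_T four_nsmul_P)
    ⟨zmodProdLift_T_P_injective, zmodProdLift_surjective _ _ closure_T_P_eq_top⟩).symm

end E0

theorem E0_rational_points :
    Nonempty (E0.Point ≃+ ZMod 2 × ZMod 4) ∧
    (∀ x y : ℚ, y ^ 2 = x * (x + 1) * (x + 9) ↔
      (x, y) ∈ ({(0, 0), (-1, 0), (-9, 0), (3, 12), (3, -12), (-3, 6), (-3, -6)} :
        Set (ℚ × ℚ))) :=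
  ⟨⟨E0.pointEquiv⟩, sq_eq_mul_add_one_mul_add_nine_iff⟩
end

section
/- If x, y ∈ ℚ satisfy y² = x(x+1)(x+9) and x is the square of a rational number, then x = 0 (and hence y = 0). In other words, the only rational point on E₀ whose x-coordinate is a rational square is (0,0). -/
/-!
Write `x = (a / b)²` in lowest terms. Clearing denominators turns the curve into
`(a² + b²)(a² + 9b²) = w²`, which is ruled out for `a, b ≠ 0` by infinite descent on `|ab|`.
If `a = 3c`, then `(b, c)` is a smaller solution. Otherwise both factors are squares, so `(a, b)`
and `(a, 3b)` are the legs of primitive Pythagorean triples. If `a` is even, the two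
parametrizations contradict each other modulo `8`. If `a` is odd, they read
`a = m² - n² = p² - q²`, `b = 2mn`, `3b = 2pq`, and splitting both sides of `3mn = pq` into common
factors yields a solution `(α, δ)` with `αδ ∣ mn`.
-/

theorem isSquare_of_isSquare_sq_mul_s18 {R : Type*} [CommRing R] [IsDomain R] [IsIntegrallyClosed R]
    {c n : R} (hc : c ≠ 0) (h : IsSquare (c ^ 2 * n)) : IsSquare n := by
  obtain ⟨w, hw⟩ := h
  rw [← sq] at hw
  obtain ⟨v, rfl⟩ : c ∣ w :=
    (IsIntegrallyClosed.pow_dvd_pow_iff two_ne_zero).1 (Dvd.intro _ hw)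
  exact ⟨v, mul_left_cancel₀ (pow_ne_zero 2 hc) (by rw [hw]; ring)⟩

theorem isSquare_mul_of_sq_mul_eq_sq_mul {R : Type*} [CommRing R] [IsDomain R]
    [IsIntegrallyClosed R] {c d u v : R} (hc : c ≠ 0) (h : c ^ 2 * u = d ^ 2 * v) :
    IsSquare (v * u) :=
  isSquare_of_isSquare_sq_mul_s18 hc ⟨d * v, by linear_combination v * h⟩

theorem isSquare_left_of_isCoprime_of_isSquare_mul {a b : ℤ} (hab : IsCoprime a b) (ha : 0 ≤ a)
    (h : IsSquare (a * b)) : IsSquare a := by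
  obtain ⟨w, hw⟩ := h
  obtain ⟨s, hs | hs⟩ := Int.sq_of_isCoprime hab (hw.trans (sq w).symm)
  · exact ⟨s, hs.trans (sq s)⟩
  · exact ⟨0, by nlinarith [sq_nonneg s]⟩

theorem exists_factors_of_mul_eq_mul {M : Type*} [CommMonoidWithZero M] [IsCancelMulZero M]
    [DecompositionMonoid M] {m n p q : M} (h : m * n = p * q) :
    ∃ α β γ δ : M, m = α * β ∧ n = γ * δ ∧ p = α * γ ∧ q = β * δ := by
  by_cases hp : p = 0
  · rcases mul_eq_zero.1 (h.trans (by rw [hp, zero_mul])) with hm | hn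
    · exact ⟨0, q, n, 1, by simp [hm, hp]⟩
    · exact ⟨m, 1, 0, q, by simp [hn, hp]⟩
  · obtain ⟨α, γ, ⟨β, rfl⟩, ⟨δ, rfl⟩, rfl⟩ :=
      exists_dvd_and_dvd_of_dvd_mul (Dvd.intro _ h.symm)
    refine ⟨α, β, γ, δ, rfl, rfl, rfl, mul_left_cancel₀ hp ?_⟩
    rw [← h, mul_mul_mul_comm]

theorem exists_eq_sq_sub_sq_of_isSquare_sq_add_sq {x y : ℤ} (hxy : IsCoprime x y) (hx : Odd x)
    (h : IsSquare (x ^ 2 + y ^ 2)) :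
    ∃ m n : ℤ, x = m ^ 2 - n ^ 2 ∧ y = 2 * (m * n) ∧ IsCoprime m n ∧ Odd (m + n) := by
  obtain ⟨z, hz⟩ := h
  have hz0 : z ≠ 0 := by
    rintro rfl
    have hx0 : x = 0 := pow_eq_zero_iff two_ne_zero |>.1 (by nlinarith [sq_nonneg x, sq_nonneg y])
    simp [hx0] at hx
  have htriple : PythagoreanTriple x y |z| := by
    rw [PythagoreanTriple, abs_mul_abs_self, ← hz]
    ring
  obtain ⟨m, n, hxmn, hymn, -, hgcd, hparity, -⟩ := htriple.coprime_classification'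
    (Int.isCoprime_iff_gcd_eq_one.1 hxy) (Int.odd_iff.1 hx) (abs_pos.2 hz0)
  exact ⟨m, n, hxmn, by rw [hymn, mul_assoc], Int.isCoprime_iff_gcd_eq_one.2 hgcd,
    Int.odd_iff.2 (by omega)⟩

theorem intCast_zmod_eight_sq_of_odd {a : ℤ} (ha : Odd a) : (a : ZMod 8) ^ 2 = 1 := by
  have h := (ZMod.intCast_zmod_eq_zero_iff_dvd (a ^ 2 - 1) 8).2
    (Int.eight_dvd_sq_sub_one_of_odd ha)
  push_cast at h
  exact sub_eq_zero.1 h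

theorem intCast_zmod_eight_sq_of_even {a : ℤ} (ha : Even a) :
    (a : ZMod 8) ^ 2 = 0 ∨ (a : ZMod 8) ^ 2 = 4 := by
  obtain ⟨c, rfl⟩ := ha
  push_cast
  generalize (c : ZMod 8) = c
  revert c
  decide

theorem sq_mul_ne_sq_mul_of_odd_add {k α β γ δ : ℤ} (hk : k % 8 = 3)
    (h₁ : Odd (α * β + γ * δ)) (h₂ : Odd (α * γ + β * δ)) :
    β ^ 2 * (k * α ^ 2 + δ ^ 2) ≠ γ ^ 2 * (α ^ 2 + k * δ ^ 2) := by
  intro h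
  have hk8 : (k : ZMod 8) = 3 := (ZMod.intCast_eq_intCast_iff k 3 8).2 hk
  have h8 := congrArg (Int.cast : ℤ → ZMod 8) h
  push_cast [hk8] at h8
  have hone_even : (Even α ∧ Odd β ∧ Odd γ ∧ Odd δ) ∨ (Odd α ∧ Even β ∧ Odd γ ∧ Odd δ) ∨
      (Odd α ∧ Odd β ∧ Even γ ∧ Odd δ) ∨ (Odd α ∧ Odd β ∧ Odd γ ∧ Even δ) := by
    simp only [← Int.not_even_iff_odd, Int.even_add, Int.even_mul] at h₁ h₂ ⊢
    tauto
  rcases hone_even with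
    ⟨hα, hβ, hγ, hδ⟩ | ⟨hα, hβ, hγ, hδ⟩ | ⟨hα, hβ, hγ, hδ⟩ | ⟨hα, hβ, hγ, hδ⟩ <;>
  simp only [intCast_zmod_eight_sq_of_odd, hα, hβ, hγ, hδ] at h8 <;>
  rcases intCast_zmod_eight_sq_of_even ‹Even _› with heven_sq | heven_sq <;>
  rw [heven_sq] at h8 <;>
  exact absurd h8 (by decide)

/-- The integral form of a rational point on `y² = x(x + 1)(x + k²)` whose `x`-coordinate is a
nonzero square: `a / b` in lowest terms is a square root of `x`, with `b` of either sign. -/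
structure IsQuarticSolution (k a b : ℤ) : Prop where
  isCoprime : IsCoprime a b
  left_ne_zero : a ≠ 0
  right_ne_zero : b ≠ 0
  isSquare : IsSquare ((a ^ 2 + b ^ 2) * (a ^ 2 + k ^ 2 * b ^ 2))

namespace IsQuarticSolution

theorem num_den {k : ℤ} {r : ℚ} (hr : r ≠ 0) (h : IsSquare ((r ^ 2 + 1) * (r ^ 2 + k ^ 2))) :
    IsQuarticSolution k r.num r.den where
  isCoprime := r.isCoprime_num_den
  left_ne_zero := Rat.num_ne_zero.2 hr
  right_ne_zero := mod_cast r.den_nz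
  isSquare := by
    obtain ⟨w, hw⟩ := h
    refine Rat.isSquare_intCast_iff.1 ⟨w * r.den ^ 2, ?_⟩
    push_cast
    rw [← Rat.mul_den_eq_num r]
    linear_combination (r.den : ℚ) ^ 4 * hw

variable {k a b : ℤ}

theorem of_mul_left {c : ℤ} (hk : k ≠ 0) (h : IsQuarticSolution k (k * c) b) :
    IsQuarticSolution k b c where
  isCoprime := h.isCoprime.of_mul_left_right.symm
  left_ne_zero := h.right_ne_zero
  right_ne_zero := right_ne_zero_of_mul h.left_ne_zero
  isSquare := isSquare_of_isSquare_sq_mul_s18 hk <| by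
    rw [show k ^ 2 * ((b ^ 2 + c ^ 2) * (b ^ 2 + k ^ 2 * c ^ 2)) =
      ((k * c) ^ 2 + b ^ 2) * ((k * c) ^ 2 + k ^ 2 * b ^ 2) by ring]
    exact h.isSquare

theorem not_odd_and_odd (hk : k % 8 = 3) (h : IsQuarticSolution k a b) : ¬(Odd a ∧ Odd b) := by
  rintro ⟨ha, hb⟩
  obtain ⟨i, hi⟩ := Int.eight_dvd_sq_sub_one_of_odd ha
  obtain ⟨j, hj⟩ := Int.eight_dvd_sq_sub_one_of_odd hb
  obtain ⟨l, rfl⟩ : ∃ l, k = 8 * l + 3 := ⟨k / 8, by omega⟩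
  have hprod : (a ^ 2 + b ^ 2) * (a ^ 2 + (8 * l + 3) ^ 2 * b ^ 2) = 2 ^ 2 *
      ((4 * (i + j) + 1) * (4 * (i + j) + 1 + 4 * ((8 * l ^ 2 + 6 * l + 1) * b ^ 2))) := by
    rw [eq_add_of_sub_eq hi, eq_add_of_sub_eq hj]
    ring
  obtain ⟨v, hv⟩ := isSquare_of_isSquare_sq_mul_s18 two_ne_zero (hprod ▸ h.isSquare)
  have hv8 := congrArg (Int.cast : ℤ → ZMod 8) hv
  push_cast [intCast_zmod_eight_sq_of_odd hb] at hv8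
  have hne : ∀ t l v : ZMod 8,
      (4 * t + 1) * (4 * t + 1 + 4 * ((8 * l ^ 2 + 6 * l + 1) * 1)) ≠ v * v := by
    decide
  exact hne _ _ _ hv8

theorem odd_add (hk : k % 8 = 3) (h : IsQuarticSolution k a b) : Odd (a + b) := by
  have hnot_both_even : ¬(Even a ∧ Even b) := fun ⟨ha, hb⟩ ↦
    Int.prime_two.not_isUnit (h.isCoprime.isUnit_of_dvd' ha.two_dvd hb.two_dvd)
  have := h.not_odd_and_odd hk
  grind

theorem isSquare_factors (h : IsQuarticSolution k a b)
    (hk : IsCoprime (a ^ 2 + b ^ 2) (k ^ 2 - 1)) :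
    IsSquare (a ^ 2 + b ^ 2) ∧ IsSquare (a ^ 2 + k ^ 2 * b ^ 2) := by
  have hcop_b : IsCoprime (a ^ 2 + b ^ 2) (b ^ 2) := by
    simpa using (h.isCoprime.pow (m := 2) (n := 2)).add_mul_left_left 1
  have hcop : IsCoprime (a ^ 2 + b ^ 2) (a ^ 2 + k ^ 2 * b ^ 2) := by
    rw [show a ^ 2 + k ^ 2 * b ^ 2 = (k ^ 2 - 1) * b ^ 2 + (a ^ 2 + b ^ 2) * 1 by ring]
    exact (hk.mul_right hcop_b).add_mul_left_right 1
  exact ⟨isSquare_left_of_isCoprime_of_isSquare_mul hcop (by positivity) h.isSquare,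
    isSquare_left_of_isCoprime_of_isSquare_mul hcop.symm (by positivity)
      (mul_comm (a ^ 2 + b ^ 2) _ ▸ h.isSquare)⟩

theorem exists_mul_dvd_mul {m n p q : ℤ} (hmn : IsCoprime m n) (hne : m * n ≠ 0)
    (hmul : m * n = p * q) (hsq : m ^ 2 - n ^ 2 = p ^ 2 - k ^ 2 * q ^ 2) :
    ∃ α δ : ℤ, α * δ ∣ m * n ∧ IsQuarticSolution k α δ := by
  obtain ⟨α, β, γ, δ, rfl, rfl, rfl, rfl⟩ := exists_factors_of_mul_eq_mul hmul
  obtain ⟨⟨hα, hβ⟩, -, hδ⟩ : (α ≠ 0 ∧ β ≠ 0) ∧ γ ≠ 0 ∧ δ ≠ 0 := by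
    simpa only [mul_ne_zero_iff] using hne
  refine ⟨α, δ, mul_dvd_mul (dvd_mul_right α β) (dvd_mul_left δ γ), ?_⟩
  exact ⟨hmn.of_mul_left_left.of_mul_right_right, hα, hδ,
    isSquare_mul_of_sq_mul_eq_sq_mul (c := β) (d := γ) hβ (by linear_combination hsq)⟩

theorem not_even_left (hk : k % 8 = 3) (hak : IsCoprime a k) (h : IsQuarticSolution k a b)
    (h₁ : IsSquare (a ^ 2 + b ^ 2)) (h₂ : IsSquare (a ^ 2 + k ^ 2 * b ^ 2)) : ¬Even a := by
  intro ha
  have hb : Odd b := by have := h.odd_add hk; grind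
  have hkb : Odd (k * b) := (Int.odd_iff.2 (by omega)).mul hb
  obtain ⟨m, n, hb_eq, ha_eq, -, hmn⟩ :=
    exists_eq_sq_sub_sq_of_isSquare_sq_add_sq h.isCoprime.symm hb (by rwa [add_comm])
  obtain ⟨p, q, hkb_eq, ha_eq', -, hpq⟩ :=
    exists_eq_sq_sub_sq_of_isSquare_sq_add_sq (hak.mul_right h.isCoprime).symm hkb
      (by rwa [mul_pow, add_comm])
  obtain ⟨α, β, γ, δ, rfl, rfl, rfl, rfl⟩ :=
    exists_factors_of_mul_eq_mul (show m * n = p * q by linarith)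
  exact sq_mul_ne_sq_mul_of_odd_add hk hmn hpq (by linear_combination hkb_eq - k * hb_eq)

theorem exists_two_mul_dvd_right (hk : Prime k) (hak : IsCoprime a k)
    (h : IsQuarticSolution k a b) (ha : Odd a)
    (h₁ : IsSquare (a ^ 2 + b ^ 2)) (h₂ : IsSquare (a ^ 2 + k ^ 2 * b ^ 2)) :
    ∃ α δ : ℤ, 2 * (α * δ) ∣ b ∧ IsQuarticSolution k α δ := by
  obtain ⟨m, n, ha_eq, rfl, hmn, -⟩ :=
    exists_eq_sq_sub_sq_of_isSquare_sq_add_sq h.isCoprime ha h₁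
  obtain ⟨p, q, ha_eq', hkb_eq, -, -⟩ :=
    exists_eq_sq_sub_sq_of_isSquare_sq_add_sq (hak.mul_right h.isCoprime) ha
      (by rwa [mul_pow])
  have hne : m * n ≠ 0 := right_ne_zero_of_mul h.right_ne_zero
  have hpq : k * (m * n) = p * q := by linarith
  suffices ∃ α δ : ℤ, α * δ ∣ m * n ∧ IsQuarticSolution k α δ from
    this.imp fun _ ↦ .imp fun _ ↦ .imp_left (mul_dvd_mul_left 2)
  rcases hk.dvd_or_dvd (Dvd.intro _ hpq) with ⟨p, rfl⟩ | ⟨q, rfl⟩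
  · rw [mul_comm m n] at hne hpq ⊢
    exact exists_mul_dvd_mul hmn.symm hne
      (mul_left_cancel₀ hk.ne_zero (by linear_combination hpq : k * (n * m) = k * (q * p)))
      (by linear_combination ha_eq - ha_eq')
  · exact exists_mul_dvd_mul hmn hne
      (mul_left_cancel₀ hk.ne_zero (by linear_combination hpq : k * (m * n) = k * (p * q)))
      (by linear_combination ha_eq' - ha_eq)

theorem exists_natAbs_lt (h : IsQuarticSolution 3 a b) :
    ∃ c d : ℤ, (c * d).natAbs < (a * b).natAbs ∧ IsQuarticSolution 3 c d := by
  by_cases h3 : 3 ∣ a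
  · obtain ⟨c, rfl⟩ := h3
    refine ⟨b, c, ?_, h.of_mul_left three_ne_zero⟩
    have := mul_ne_zero h.left_ne_zero h.right_ne_zero
    grind
  · have ha3 : IsCoprime a 3 := (Int.prime_three.coprime_iff_not_dvd.2 h3).symm
    have hodd : Odd (a ^ 2 + b ^ 2) := by
      have := h.odd_add (by norm_num)
      simpa [Int.odd_add, Int.odd_pow, Int.even_pow] using this
    have hcop : IsCoprime (a ^ 2 + b ^ 2) (3 ^ 2 - 1) := by
      simpa using (Int.isCoprime_two_right.2 hodd).pow_right (n := 3)
    obtain ⟨hs, ht⟩ := h.isSquare_factors hcop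
    have ha : Odd a := Int.not_even_iff_odd.1 (h.not_even_left (by norm_num) ha3 hs ht)
    obtain ⟨α, δ, hdvd, hαδ⟩ := h.exists_two_mul_dvd_right Int.prime_three ha3 ha hs ht
    refine ⟨α, δ, ?_, hαδ⟩
    have hle : (2 * (α * δ)).natAbs ≤ (a * b).natAbs :=
      Int.natAbs_le_of_dvd_ne_zero (hdvd.mul_left a) (mul_ne_zero h.left_ne_zero h.right_ne_zero)
    have hne : α * δ ≠ 0 := mul_ne_zero hαδ.left_ne_zero hαδ.right_ne_zero
    omega

end IsQuarticSolution

theorem not_isQuarticSolution_three (a b : ℤ) : ¬IsQuarticSolution 3 a b := by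
  induction hN : (a * b).natAbs using Nat.strong_induction_on generalizing a b with
  | _ N ih =>
    intro h
    obtain ⟨c, d, hlt, hcd⟩ := h.exists_natAbs_lt
    exact ih _ (hN ▸ hlt) c d rfl hcd

theorem E0_no_rational_point_with_square_x (x y : ℚ)
    (h : y ^ 2 = x * (x + 1) * (x + 9)) (hx : ∃ r : ℚ, x = r ^ 2) :
    x = 0 ∧ y = 0 := by
  obtain ⟨r, rfl⟩ := hx
  by_cases hr : r = 0
  · subst hr
    simpa using h
  · have hsq : IsSquare ((r ^ 2 + 1) * (r ^ 2 + (3 : ℤ) ^ 2)) := by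
      refine ⟨y / r, ?_⟩
      field_simp
      push_cast
      linear_combination -h
    exact absurd (IsQuarticSolution.num_den hr hsq) (not_isQuarticSolution_three _ _)
end
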